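/- Let μ̌ ∈ 𝒫(ℝ)^{dT} satisfy ℳ(μ̌) ≠ ∅ and let μ̌ⁿ = (μ^n_{t,i}) satisfy r_n := 2 max_{1≤t≤T} Σ_{1≤i≤d} 𝒲₁(μ^n_{t,i}, μ_{t,i}) → 0 as n → ∞. Then for all n ≥ 1, ℳ_{r_n}(μ̌ⁿ) ≠ ∅. Moreover, if c is Lipschitz, then for any sequence (ε_n)_{n≥1} converging to zero with ε_n ≥ r_n for all n ≥ 1, one has lim_{n→∞} P̄_{ε_n}(μ̌ⁿ) = P̄(μ̌) and lim_{n→∞} P̲_{ε_n}(μ̌ⁿ) = P̲(μ̌). -/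

import Mathlib

/-!
Two mechanisms drive the convergence.

*Transport.* Given `π` with marginals `μ_{t,i}`, move each coordinate separately along an optimal
coupling of `μ_{t,i}` and `ν_{t,i}`, using one independent uniform variable per coordinate. The new
path up to time `t` is a function of the old path up to time `t` and of independent noise. Writing
`E|E[D | m]|` as the largest expectation `E[h D]` over `m`-measurable `|h| ≤ 1`, one sees that the
martingale defect grows by at most the displacement of the coordinates at the times `t` and `t + 1`,
that is, by at most `2 max_t ∑_i W₁(μ_{t,i}, ν_{t,i})`, while the integral of a Lipschitz cost
changes by at most a multiple of `∑_{t,i} W₁(μ_{t,i}, ν_{t,i})`. Applied from `μ̌` to `μ̌ⁿ` this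
gives nonemptiness and the lower bound for `P̄_{ε_n}(μ̌ⁿ)`; applied from `μ̌ⁿ` to `μ̌` it reduces
the upper bound to relaxed problems with the fixed marginals `μ̌`.

*Compactness.* Probability measures with prescribed marginals form a weakly compact set, on which
integrals of continuous functions of linear growth are weakly continuous, because the first absolute
moment is constant on that set. As martingale constraints can be tested against compactly supported
continuous functions of the past, limits of measures with vanishing defect are martingale measures,
so for small `δ` every element of `ℳ_δ(μ̌)` has nearly the same cost as some element of `ℳ(μ̌)`.

The lower values are the negatives of the upper values for `-c`.
-/

open MeasureTheory Filter

namespace MMOT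

/-- Path space `𝒳 = (ℝ^d)^T`. -/
abbrev Path (T d : ℕ) := Fin T → Fin d → ℝ

/-- σ-algebra generated by the coordinates `X_0, …, X_t` (0-indexed). -/
noncomputable def pastSigma (T d : ℕ) (t : ℕ) : MeasurableSpace (Path T d) :=
  ⨆ s : Fin T, ⨆ _ : (s : ℕ) ≤ t, MeasurableSpace.comap (fun x => x s) inferInstance

def HasMarginals {T d : ℕ} (π : Measure (Path T d)) (μ : Fin T → Fin d → Measure ℝ) : Prop :=
  ∀ t i, π.map (fun x => x t i) = μ t i

/-- `E_π[X_{t+1,i} | X_0,…,X_t]`. -/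
noncomputable def condNext {T d : ℕ} (π : Measure (Path T d)) (t : ℕ) (ht : t + 1 < T)
    (i : Fin d) : Path T d → ℝ :=
  π[fun x => x ⟨t + 1, ht⟩ i | pastSigma T d t]

def IsMartingaleMeasure {T d : ℕ} (π : Measure (Path T d)) : Prop :=
  ∀ (t : ℕ) (ht : t + 1 < T) (i : Fin d),
    condNext π t ht i =ᵐ[π] fun x => x ⟨t, Nat.lt_of_succ_lt ht⟩ i

/-- The set `ℳ(μ̌)` of calibrated martingale measures. -/
def MartSet {T d : ℕ} (μ : Fin T → Fin d → Measure ℝ) : Set (Measure (Path T d)) :=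
  {π | IsProbabilityMeasure π ∧ HasMarginals π μ ∧ IsMartingaleMeasure π}

/-- The relaxed set `ℳ_ε(μ̌)`: calibrated measures whose martingale defect is at most `ε`. -/
def MartSetEps {T d : ℕ} (μ : Fin T → Fin d → Measure ℝ) (ε : ℝ) :
    Set (Measure (Path T d)) :=
  {π | IsProbabilityMeasure π ∧ HasMarginals π μ ∧
    ∀ (t : ℕ) (ht : t + 1 < T),
      ∫ x, ∑ i, |condNext π t ht i x - x ⟨t, Nat.lt_of_succ_lt ht⟩ i| ∂π ≤ ε}

def primalVals {T d : ℕ} (c : Path T d → ℝ) (S : Set (Measure (Path T d))) : Set ℝ :=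
  {r | ∃ π ∈ S, Integrable c π ∧ r = ∫ x, c x ∂π}

noncomputable def PbarEps {T d : ℕ} (μ : Fin T → Fin d → Measure ℝ) (c : Path T d → ℝ)
    (ε : ℝ) : ℝ :=
  sSup (primalVals c (MartSetEps μ ε))

noncomputable def PlowEps {T d : ℕ} (μ : Fin T → Fin d → Measure ℝ) (c : Path T d → ℝ)
    (ε : ℝ) : ℝ :=
  sInf (primalVals c (MartSetEps μ ε))

noncomputable def Pbar {T d : ℕ} (μ : Fin T → Fin d → Measure ℝ) (c : Path T d → ℝ) : ℝ :=
  sSup (primalVals c (MartSet μ))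

noncomputable def Plow {T d : ℕ} (μ : Fin T → Fin d → Measure ℝ) (c : Path T d → ℝ) : ℝ :=
  sInf (primalVals c (MartSet μ))

/-- Wasserstein-1 distance on probability measures on `ℝ`. -/
noncomputable def W1R (μ ν : Measure ℝ) : ℝ :=
  sInf {r | ∃ γ : Measure (ℝ × ℝ), IsProbabilityMeasure γ ∧ γ.map Prod.fst = μ ∧
    γ.map Prod.snd = ν ∧ Integrable (fun p => |p.1 - p.2|) γ ∧
    r = ∫ p, |p.1 - p.2| ∂γ}

/-- Lipschitz continuity with respect to the `ℓ¹`-norm on the path space. -/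
def LipschitzCost {T d : ℕ} (L : ℝ) (c : Path T d → ℝ) : Prop :=
  ∀ x y, |c x - c y| ≤ L * ∑ t, ∑ i, |x t i - y t i|

section FixedMarginals

open scoped ENNReal

variable {ι E : Type*} {F : ι → Type*} [Countable ι] [TopologicalSpace E] [MeasurableSpace E]
  [∀ j, TopologicalSpace (F j)] [∀ j, MeasurableSpace (F j)] {g : ∀ j, E → F j}

theorem isTightMeasureSet_of_forall_image_map
    (hg : IsProperMap fun x j => g j x) (hgm : ∀ j, Measurable (g j)) {S : Set (Measure E)}
    [∀ j, T2Space (F j)] [∀ j, OpensMeasurableSpace (F j)]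
    (hS : ∀ j, IsTightMeasureSet (Measure.map (g j) '' S)) : IsTightMeasureSet S := by
  rw [isTightMeasureSet_iff_exists_isCompact_measure_compl_le]
  intro ε hε
  obtain ⟨δ, hδ, hδε⟩ := ENNReal.exists_pos_sum_of_countable' hε.ne' ι
  choose K hK hKS using fun j =>
    isTightMeasureSet_iff_exists_isCompact_measure_compl_le.1 (hS j) (δ j) (hδ j)
  refine ⟨(fun x j => g j x) ⁻¹' Set.univ.pi K, hg.isCompact_preimage (isCompact_univ_pi hK),
    fun p hp => ?_⟩
  have hcompl : ((fun x j => g j x) ⁻¹' Set.univ.pi K)ᶜ = ⋃ j, g j ⁻¹' (K j)ᶜ := by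
    ext x; simp
  calc p ((fun x j => g j x) ⁻¹' Set.univ.pi K)ᶜ
    _ ≤ ∑' j, p (g j ⁻¹' (K j)ᶜ) := hcompl ▸ measure_iUnion_le _
    _ = ∑' j, p.map (g j) (K j)ᶜ := by
      simp_rw [fun j => Measure.map_apply (μ := p) (hgm j) (hK j).measurableSet.compl]
    _ ≤ ∑' j, δ j := ENNReal.tsum_le_tsum fun j => hKS j _ ⟨p, hp, rfl⟩
    _ ≤ ε := hδε.le

theorem isCompact_setOf_forall_map_eq [T2Space E] [BorelSpace E]
    [∀ j, PolishSpace (F j)] [∀ j, BorelSpace (F j)]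
    (hg : IsProperMap fun x j => g j x) (ν : ∀ j, Measure (F j)) [∀ j, IsProbabilityMeasure (ν j)] :
    IsCompact {p : ProbabilityMeasure E | ∀ j, (p : Measure E).map (g j) = ν j} := by
  have hgc (j) : Continuous (g j) := (continuous_apply j).comp hg.continuous
  set S := {p : ProbabilityMeasure E | ∀ j, (p : Measure E).map (g j) = ν j}
  have htight : IsTightMeasureSet {p : Measure E | ∃ q ∈ S, (q : Measure E) = p} := by
    refine isTightMeasureSet_of_forall_image_map hg (fun j => (hgc j).measurable) fun j =>
      (isTightMeasureSet_singleton (μ := ν j)).subset ?_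
    rintro _ ⟨_, ⟨q, hq, rfl⟩, rfl⟩
    exact hq j
  have hclosed : IsClosed S := by
    have hclosed_map (j) :
        IsClosed {p : ProbabilityMeasure E | (p : Measure E).map (g j) = ν j} := by
      let νj : ProbabilityMeasure (F j) := ⟨ν j, inferInstance⟩
      have hiff (p : ProbabilityMeasure E) :
          p.map (hgc j).aemeasurable = νj ↔ (p : Measure E).map (g j) = ν j := Subtype.ext_iff
      simpa only [hiff] using
        isClosed_eq (ProbabilityMeasure.continuous_map (hgc j)) (continuous_const (y := νj))
    simpa only [S, Set.ofPred_forall] using isClosed_iInter hclosed_map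
  exact hclosed.closure_eq ▸ isCompact_closure_of_isTightMeasureSet htight

end FixedMarginals

section WeakContinuity

variable {E : Type*} [TopologicalSpace E] [MeasurableSpace E] [OpensMeasurableSpace E]

theorem lowerSemicontinuousOn_integral_of_nonneg {f : E → ℝ} (hf : Continuous f) (hf0 : 0 ≤ f) :
    LowerSemicontinuousOn (fun p : ProbabilityMeasure E => ∫ x, f x ∂(p : Measure E))
      {p | Integrable f (p : Measure E)} := by
  let trunc (K : ℕ) : BoundedContinuousFunction E ℝ :=
    .ofNormedAddCommGroup (fun x => min (f x) K) (by fun_prop) K fun x => by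
      rw [Real.norm_of_nonneg (le_min (hf0 x) K.cast_nonneg)]
      exact min_le_right _ _
  have htrunc (p : ProbabilityMeasure E) (K : ℕ) : Integrable (trunc K) (p : Measure E) :=
    (trunc K).integrable _
  intro p hp y hy
  have hlim : Tendsto (fun K => ∫ x, trunc K x ∂(p : Measure E)) atTop
      (nhds (∫ x, f x ∂(p : Measure E))) := by
    refine integral_tendsto_of_tendsto_of_monotone (htrunc p) hp
      (ae_of_all _ fun x K K' hKK' => min_le_min_left _ (Nat.cast_le.2 hKK'))
      (ae_of_all _ fun x => tendsto_atTop_of_eventually_const (i₀ := ⌈f x⌉₊) fun K hK => ?_)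
    exact min_eq_left ((Nat.le_ceil _).trans (Nat.cast_le.2 hK))
  obtain ⟨K, hK⟩ := (hlim.eventually_const_lt hy).exists
  have hnear := ((ProbabilityMeasure.continuous_integral_boundedContinuousFunction
    (trunc K)).tendsto p).eventually_const_lt hK
  filter_upwards [nhdsWithin_le_nhds hnear, self_mem_nhdsWithin] with q hq hqf
  exact hq.trans_le (integral_mono (htrunc q K) hqf fun x => min_le_left _ _)

theorem continuousOn_integral_of_abs_le {f g : E → ℝ} (hf : Continuous f) (hg : Continuous g)
    (hfg : ∀ x, |f x| ≤ g x) {S : Set (ProbabilityMeasure E)} {C : ℝ}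
    (hgi : ∀ p ∈ S, Integrable g (p : Measure E)) (hgC : ∀ p ∈ S, ∫ x, g x ∂(p : Measure E) = C) :
    ContinuousOn (fun p : ProbabilityMeasure E => ∫ x, f x ∂(p : Measure E)) S := by
  -- `g + h` is nonnegative and `∫ g` is constant on `S`, so `∫ h` inherits the lower semicontinuity
  -- of `∫ (g + h)`; this is then applied to `h = f` and `h = -f`.
  have hlower (h : E → ℝ) (hh : Continuous h) (hhg : ∀ x, |h x| ≤ g x) :
      LowerSemicontinuousOn (fun p : ProbabilityMeasure E => ∫ x, h x ∂(p : Measure E)) S := by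
    have hhi (p) (hp : p ∈ S) : Integrable h (p : Measure E) :=
      (hgi p hp).mono' hh.aestronglyMeasurable (ae_of_all _ hhg)
    have hsum (p) (hp : p ∈ S) :
        ∫ x, (g + h) x ∂(p : Measure E) = C + ∫ x, h x ∂(p : Measure E) := by
      rw [integral_add' (hgi p hp) (hhi p hp), hgC p hp]
    intro p hp y hy
    have hlsc := (lowerSemicontinuousOn_integral_of_nonneg (hg.add hh)
      fun x => by simpa using neg_le_iff_add_nonneg'.1 (neg_le_of_abs_le (hhg x))).mono
        fun p hp => (hgi p hp).add (hhi p hp)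
    filter_upwards [hlsc p hp (C + y) ((add_lt_add_right hy C).trans_eq (hsum p hp).symm),
      self_mem_nhdsWithin] with q hq hqS
    exact lt_of_add_lt_add_left (hq.trans_eq (hsum q hqS))
  refine continuousOn_iff_lower_upperSemicontinuousOn.2 ⟨hlower f hf hfg, fun p hp y hy => ?_⟩
  have := hlower (-f) hf.neg (by simpa using hfg) p hp (-y) (by simpa [integral_neg] using hy)
  simpa [integral_neg] using this

end WeakContinuity

section Marginals

variable {T d : ℕ} {μ : Fin T → Fin d → Measure ℝ}

theorem isCompact_setOf_hasMarginals (hμ : ∀ t i, IsProbabilityMeasure (μ t i)) :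
    IsCompact {p : ProbabilityMeasure (Path T d) | HasMarginals (p : Measure (Path T d)) μ} := by
  have hproper : IsProperMap fun (x : Path T d) (j : Fin T × Fin d) => x j.1 j.2 :=
    (Homeomorph.piCurry (X := Fin T) (Y := Fin d) (Z := ℝ)).symm.isProperMap
  have := isCompact_setOf_forall_map_eq hproper fun j => μ j.1 j.2
  simpa only [HasMarginals, Prod.forall] using this

namespace HasMarginals

variable {π : Measure (Path T d)}

theorem integrable_coord (hπ : HasMarginals π μ) (hmom : ∀ t i, Integrable (fun y : ℝ => y) (μ t i))
    (t : Fin T) (i : Fin d) : Integrable (fun x : Path T d => x t i) π :=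
  (hπ t i ▸ hmom t i).comp_measurable (by fun_prop)

theorem integrable_sum_abs (hπ : HasMarginals π μ)
    (hmom : ∀ t i, Integrable (fun y : ℝ => y) (μ t i)) :
    Integrable (fun x : Path T d => ∑ t, ∑ i, |x t i|) π :=
  integrable_finsetSum _ fun t _ => integrable_finsetSum _ fun i _ =>
    (hπ.integrable_coord hmom t i).abs

theorem integral_sum_abs (hπ : HasMarginals π μ)
    (hmom : ∀ t i, Integrable (fun y : ℝ => y) (μ t i)) :
    ∫ x, ∑ t, ∑ i, |x t i| ∂π = ∑ t, ∑ i, ∫ y, |y| ∂μ t i := by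
  have hint (t i) := (hπ.integrable_coord hmom t i).abs
  rw [integral_finsetSum _ fun t _ => integrable_finsetSum _ fun i _ => hint t i]
  refine Finset.sum_congr rfl fun t _ => ?_
  rw [integral_finsetSum _ fun i _ => hint t i]
  refine Finset.sum_congr rfl fun i _ => ?_
  have hmeas : Measurable fun x : Path T d => x t i := by fun_prop
  rw [← hπ t i, integral_map hmeas.aemeasurable (by fun_prop)]

theorem integrable_of_linear_growth [IsFiniteMeasure π] (hπ : HasMarginals π μ)
    (hmom : ∀ t i, Integrable (fun y : ℝ => y) (μ t i)) {f : Path T d → ℝ} (hf : Continuous f)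
    {a b : ℝ} (hfab : ∀ x, |f x| ≤ a + b * ∑ t, ∑ i, |x t i|) : Integrable f π :=
  ((integrable_const a).add ((hπ.integrable_sum_abs hmom).const_mul b)).mono'
    hf.aestronglyMeasurable (ae_of_all _ hfab)

end HasMarginals

theorem continuousOn_integral_of_linear_growth
    (hmom : ∀ t i, Integrable (fun y : ℝ => y) (μ t i)) {f : Path T d → ℝ} (hf : Continuous f)
    {a b : ℝ} (hfab : ∀ x, |f x| ≤ a + b * ∑ t, ∑ i, |x t i|) :
    ContinuousOn (fun p : ProbabilityMeasure (Path T d) => ∫ x, f x ∂(p : Measure (Path T d)))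
      {p | HasMarginals (p : Measure (Path T d)) μ} := by
  refine continuousOn_integral_of_abs_le (C := a + b * ∑ t, ∑ i, ∫ y, |y| ∂μ t i) hf
    (by fun_prop) hfab (fun p hp => ?_) fun p hp => ?_
  · exact (integrable_const a).add ((hp.integrable_sum_abs hmom).const_mul b)
  · rw [integral_add (integrable_const a) ((hp.integrable_sum_abs hmom).const_mul b),
      integral_const_mul, hp.integral_sum_abs hmom]
    simp

end Marginals

section OptimalCoupling

variable {μ ν : Measure ℝ}

/-- The transport costs `∫ |x - y| dγ` of the couplings `γ` of `μ` and `ν`; the Wasserstein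
distance `W1R μ ν` is its infimum. -/
def couplingCosts (μ ν : Measure ℝ) : Set ℝ :=
  {r | ∃ γ : Measure (ℝ × ℝ), IsProbabilityMeasure γ ∧ γ.map Prod.fst = μ ∧
    γ.map Prod.snd = ν ∧ Integrable (fun p => |p.1 - p.2|) γ ∧ r = ∫ p, |p.1 - p.2| ∂γ}

theorem couplingCosts_subset_swap (μ ν : Measure ℝ) : couplingCosts μ ν ⊆ couplingCosts ν μ := by
  rintro _ ⟨γ, hγ, hfst, hsnd, hint, rfl⟩
  refine ⟨γ.map Prod.swap, Measure.isProbabilityMeasure_map (by fun_prop), ?_, ?_, ?_, ?_⟩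
  · rwa [Measure.map_map (by fun_prop) (by fun_prop)]
  · rwa [Measure.map_map (by fun_prop) (by fun_prop)]
  · rw [integrable_map_measure (by fun_prop) (by fun_prop)]
    simpa only [Function.comp_def, Prod.fst_swap, Prod.snd_swap, abs_sub_comm] using hint
  · rw [integral_map (by fun_prop) (by fun_prop)]
    simp only [Prod.fst_swap, Prod.snd_swap, abs_sub_comm]

theorem W1R_comm (μ ν : Measure ℝ) : W1R μ ν = W1R ν μ :=
  congrArg sInf ((couplingCosts_subset_swap μ ν).antisymm (couplingCosts_subset_swap ν μ))

theorem isCompact_setOf_map_fst_snd_eq [IsProbabilityMeasure μ] [IsProbabilityMeasure ν] :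
    IsCompact {p : ProbabilityMeasure (ℝ × ℝ) |
      (p : Measure (ℝ × ℝ)).map Prod.fst = μ ∧ (p : Measure (ℝ × ℝ)).map Prod.snd = ν} := by
  have hprob : ∀ j, IsProbabilityMeasure (![μ, ν] j) := by
    simpa [Fin.forall_fin_two] using ⟨‹_›, ‹_›⟩
  have hproper : IsProperMap fun (x : ℝ × ℝ) (j : Fin 2) => ![x.1, x.2] j :=
    Homeomorph.finTwoArrow.symm.isProperMap
  simpa [Fin.forall_fin_two] using isCompact_setOf_forall_map_eq hproper ![μ, ν]

theorem exists_integral_eq_W1R [IsProbabilityMeasure μ] [IsProbabilityMeasure ν]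
    (hμ : Integrable (fun y : ℝ => y) μ) (hν : Integrable (fun y : ℝ => y) ν) :
    ∃ γ : Measure (ℝ × ℝ), IsProbabilityMeasure γ ∧ γ.map Prod.fst = μ ∧ γ.map Prod.snd = ν ∧
      ∫ p, |p.1 - p.2| ∂γ = W1R μ ν := by
  set S := {p : ProbabilityMeasure (ℝ × ℝ) |
    (p : Measure (ℝ × ℝ)).map Prod.fst = μ ∧ (p : Measure (ℝ × ℝ)).map Prod.snd = ν}
  have hfst (p) (hp : p ∈ S) : Integrable (fun z : ℝ × ℝ => z.1) (p : Measure (ℝ × ℝ)) :=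
    (hp.1 ▸ hμ).comp_measurable measurable_fst
  have hsnd (p) (hp : p ∈ S) : Integrable (fun z : ℝ × ℝ => z.2) (p : Measure (ℝ × ℝ)) :=
    (hp.2 ▸ hν).comp_measurable measurable_snd
  have hcont : ContinuousOn (fun p : ProbabilityMeasure (ℝ × ℝ) =>
      ∫ z, |z.1 - z.2| ∂(p : Measure (ℝ × ℝ))) S := by
    refine continuousOn_integral_of_abs_le (g := fun z => |z.1| + |z.2|)
      (C := ∫ y, |y| ∂μ + ∫ y, |y| ∂ν) (by fun_prop) (by fun_prop)
      (fun z => by simpa using abs_sub z.1 z.2) (fun p hp => (hfst p hp).abs.add (hsnd p hp).abs)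
      fun p hp => ?_
    rw [integral_add (hfst p hp).abs (hsnd p hp).abs]
    congr 1
    · rw [← hp.1, integral_map (by fun_prop) (by fun_prop)]
    · rw [← hp.2, integral_map (by fun_prop) (by fun_prop)]
  have hprod : (⟨μ.prod ν, inferInstance⟩ : ProbabilityMeasure (ℝ × ℝ)) ∈ S :=
    ⟨Measure.fst_prod, Measure.snd_prod⟩
  obtain ⟨γ, hγ, hmin⟩ := isCompact_setOf_map_fst_snd_eq.exists_isMinOn ⟨_, hprod⟩ hcont
  refine ⟨γ, inferInstance, hγ.1, hγ.2, (IsLeast.csInf_eq ⟨?_, ?_⟩).symm⟩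
  · exact ⟨γ, inferInstance, hγ.1, hγ.2, ((hfst γ hγ).sub (hsnd γ hγ)).abs, rfl⟩
  · rintro _ ⟨p, hp, h1, h2, -, rfl⟩
    exact hmin (⟨h1, h2⟩ : (⟨p, hp⟩ : ProbabilityMeasure (ℝ × ℝ)) ∈ S)

end OptimalCoupling

section CondExpDuality

variable {Ω : Type*} {m m₀ : MeasurableSpace Ω} {π : Measure Ω} {D h : Ω → ℝ} {C : ℝ}

theorem integral_mul_condExp_eq [IsFiniteMeasure π] (hm : m ≤ m₀) (hD : Integrable D π)
    (hh : StronglyMeasurable[m] h) (hhC : ∀ x, |h x| ≤ C) :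
    ∫ x, h x * (π[D | m]) x ∂π = ∫ x, h x * D x ∂π := by
  rw [← integral_condExp hm (f := fun x => h x * D x)]
  exact (integral_congr_ae
    (condExp_stronglyMeasurable_mul_of_bound hm hh hD C (ae_of_all _ hhC))).symm

theorem abs_integral_mul_le_integral_abs_condExp [IsFiniteMeasure π] (hm : m ≤ m₀)
    (hD : Integrable D π) (hh : StronglyMeasurable[m] h) (hhC : ∀ x, |h x| ≤ C) :
    |∫ x, h x * D x ∂π| ≤ C * ∫ x, |(π[D | m]) x| ∂π := by
  rw [← integral_mul_condExp_eq hm hD hh hhC, ← integral_const_mul]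
  refine norm_integral_le_of_norm_le (f := fun x => h x * (π[D | m]) x)
    (integrable_condExp.abs.const_mul C) (ae_of_all _ fun x => ?_)
  exact (abs_mul _ _).trans_le (mul_le_mul_of_nonneg_right (hhC x) (abs_nonneg _))

theorem exists_integral_abs_condExp_eq [IsFiniteMeasure π] (hm : m ≤ m₀) (hD : Integrable D π) :
    ∃ h : Ω → ℝ, StronglyMeasurable[m] h ∧ (∀ x, |h x| ≤ 1) ∧
      ∫ x, |(π[D | m]) x| ∂π = ∫ x, h x * D x ∂π := by
  classical
  let h : Ω → ℝ := fun x => if 0 ≤ (π[D | m]) x then 1 else -1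
  have hh : StronglyMeasurable[m] h := StronglyMeasurable.ite
    (measurableSet_le measurable_const stronglyMeasurable_condExp.measurable)
    stronglyMeasurable_const stronglyMeasurable_const
  have hh1 (x) : |h x| ≤ 1 := by dsimp only [h]; split_ifs <;> simp
  refine ⟨h, hh, hh1, ?_⟩
  rw [← integral_mul_condExp_eq hm hD hh hh1]
  refine integral_congr_ae (ae_of_all _ fun x => ?_)
  dsimp only [h]
  split_ifs with hx
  · rw [abs_of_nonneg hx, one_mul]
  · rw [abs_of_neg (not_le.1 hx), neg_one_mul]

/-- The noise `u` adds no information on `D`: for each fixed `u`, an `m'`-measurable test function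
of `Y (·, u)` is an `m`-measurable test function. -/
theorem integral_abs_condExp_map_prod_le {U Ω' : Type*} {mU : MeasurableSpace U}
    {m' m₀' : MeasurableSpace Ω'} [IsProbabilityMeasure π] {ρ : Measure U}
    [IsProbabilityMeasure ρ] (hm : m ≤ m₀) (hm' : m' ≤ m₀') {Y : Ω × U → Ω'} (hY : Measurable Y)
    (hYm : ∀ u, Measurable[m, m'] fun x => Y (x, u)) {D' : Ω' → ℝ} (hD : Integrable D π)
    (hD' : Integrable D' ((π.prod ρ).map Y)) :
    ∫ y, |(((π.prod ρ).map Y)[D' | m']) y| ∂(π.prod ρ).map Y ≤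
      ∫ x, |(π[D | m]) x| ∂π + ∫ z, |D z.1 - D' (Y z)| ∂π.prod ρ := by
  have : IsProbabilityMeasure ((π.prod ρ).map Y) := Measure.isProbabilityMeasure_map hY.aemeasurable
  obtain ⟨h, hh, hh1, heq⟩ := exists_integral_abs_condExp_eq hm' hD'
  have hhY : AEStronglyMeasurable (fun z => h (Y z)) (π.prod ρ) :=
    ((hh.mono hm').comp_measurable hY).aestronglyMeasurable
  have hhY1 : ∀ᵐ z ∂π.prod ρ, ‖h (Y z)‖ ≤ 1 := ae_of_all _ fun z => hh1 _
  have hD₁ : Integrable (fun z : Ω × U => D z.1) (π.prod ρ) := hD.comp_fst _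
  have hD₂ : Integrable (fun z => D' (Y z)) (π.prod ρ) := hD'.comp_measurable hY
  have hprod := hD₁.bdd_mul hhY hhY1
  have hdiff : Integrable (fun z => |D z.1 - D' (Y z)|) (π.prod ρ) := (hD₁.sub hD₂).abs
  have hfst : ∫ z, h (Y z) * D z.1 ∂π.prod ρ ≤ ∫ x, |(π[D | m]) x| ∂π := by
    rw [integral_prod_symm _ hprod]
    calc ∫ u, ∫ x, h (Y (x, u)) * D x ∂π ∂ρ
      _ ≤ ∫ _, ∫ x, |(π[D | m]) x| ∂π ∂ρ :=
        integral_mono hprod.integral_prod_right (integrable_const _) fun u =>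
          (le_abs_self _).trans ((abs_integral_mul_le_integral_abs_condExp hm hD
            (hh.comp_measurable (hYm u)) fun x => hh1 _).trans_eq (one_mul _))
      _ = ∫ x, |(π[D | m]) x| ∂π := by simp
  calc ∫ y, |(((π.prod ρ).map Y)[D' | m']) y| ∂(π.prod ρ).map Y
    _ = ∫ z, h (Y z) * D' (Y z) ∂π.prod ρ := heq.trans (integral_map hY.aemeasurable
        ((hh.mono hm').aestronglyMeasurable.mul hD'.aestronglyMeasurable))
    _ ≤ ∫ z, (h (Y z) * D z.1 + |D z.1 - D' (Y z)|) ∂π.prod ρ := by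
      refine integral_mono (hD₂.bdd_mul hhY hhY1)
        (hprod.add hdiff) fun z => ?_
      have := (abs_le.1 ((abs_mul _ _).trans_le
        (mul_le_of_le_one_left (abs_nonneg (D z.1 - D' (Y z))) (hh1 (Y z))))).1
      dsimp only
      linarith
    _ ≤ _ := by
      rw [integral_add hprod hdiff]
      gcongr

end CondExpDuality

section CondExpComap

variable {Ω E : Type*} {m₀ : MeasurableSpace Ω} {π : Measure Ω} [NormedAddCommGroup E]
  [NormedSpace ℝ E] [FiniteDimensional ℝ E] [MeasurableSpace E] [BorelSpace E]

theorem condExp_comap_ae_eq_zero [IsFiniteMeasure π] {X : Ω → E} (hX : Measurable X) {D : Ω → ℝ}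
    (hD : Integrable D π)
    (h : ∀ g : E → ℝ, Continuous g → HasCompactSupport g → ∫ x, g (X x) * D x ∂π = 0) :
    π[D | MeasurableSpace.comap X inferInstance] =ᵐ[π] 0 := by
  obtain ⟨φ, hφ, hφX⟩ := (stronglyMeasurable_condExp (μ := π) (f := D)
    (m := MeasurableSpace.comap X inferInstance)).measurable.exists_eq_measurable_comp
  have hφint : Integrable φ (π.map X) := by
    rw [integrable_map_measure hφ.aestronglyMeasurable hX.aemeasurable, ← hφX]
    exact integrable_condExp
  have hφzero : φ =ᵐ[π.map X] 0 := by
    refine ae_eq_zero_of_integral_contDiff_smul_eq_zero hφint.locallyIntegrable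
      fun g hg hgsupp => ?_
    obtain ⟨C, hC⟩ := hgsupp.exists_bound_of_continuous hg.continuous
    calc ∫ y, g y • φ y ∂π.map X
      _ = ∫ x, g (X x) * (π[D | MeasurableSpace.comap X inferInstance]) x ∂π := by
        rw [hφX]
        exact integral_map hX.aemeasurable
          (hg.continuous.aestronglyMeasurable.smul hφ.aestronglyMeasurable)
      _ = ∫ x, g (X x) * D x ∂π := integral_mul_condExp_eq hX.comap_le hD
        (hg.continuous.measurable.comp (comap_measurable X)).stronglyMeasurable fun x => hC _
      _ = 0 := h g hg.continuous hgsupp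
  rw [hφX]
  exact ae_of_ae_map hX.aemeasurable hφzero

end CondExpComap

section Defect

variable {T d : ℕ} {μ : Fin T → Fin d → Measure ℝ} {π : Measure (Path T d)}

/-- The increment `X_{t+1,i} - X_{t,i}`. -/
def incr (t : ℕ) (ht : t + 1 < T) (i : Fin d) (x : Path T d) : ℝ :=
  x ⟨t + 1, ht⟩ i - x ⟨t, Nat.lt_of_succ_lt ht⟩ i

/-- The initial segment `(X_0, …, X_t)` of a path, which generates `pastSigma T d t`. -/
def past (T d t : ℕ) (x : Path T d) : {s : Fin T // (s : ℕ) ≤ t} → Fin d → ℝ :=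
  fun s => x s

theorem continuous_incr (t : ℕ) (ht : t + 1 < T) (i : Fin d) : Continuous (incr t ht i) := by
  unfold incr
  fun_prop

theorem continuous_past (t : ℕ) : Continuous (past T d t) := by
  unfold past
  fun_prop

theorem pastSigma_eq_comap_past (t : ℕ) :
    pastSigma T d t = MeasurableSpace.comap (past T d t) inferInstance := by
  simp only [pastSigma, MeasurableSpace.pi, MeasurableSpace.comap_iSup,
    MeasurableSpace.comap_comp, iSup_subtype]
  rfl

theorem pastSigma_le (t : ℕ) : pastSigma T d t ≤ MeasurableSpace.pi :=
  pastSigma_eq_comap_past (T := T) (d := d) t ▸ (continuous_past t).measurable.comap_le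

theorem measurable_pastSigma_iff {Ω : Type*} {m : MeasurableSpace Ω} {t : ℕ} {Y : Ω → Path T d} :
    Measurable[m, pastSigma T d t] Y ↔
      ∀ s : Fin T, (s : ℕ) ≤ t → ∀ i, Measurable fun ω => Y ω s i := by
  rw [pastSigma_eq_comap_past, measurable_comap_iff, measurable_pi_iff, Subtype.forall]
  exact forall₂_congr fun _ _ => measurable_pi_iff

theorem measurable_coord_pastSigma {s : Fin T} {t : ℕ} (hst : (s : ℕ) ≤ t) (i : Fin d) :
    Measurable[pastSigma T d t] fun x : Path T d => x s i :=
  measurable_pastSigma_iff.1 (@measurable_id _ (pastSigma T d t)) s hst i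

theorem HasMarginals.integrable_incr (hπ : HasMarginals π μ)
    (hmom : ∀ t i, Integrable (fun y : ℝ => y) (μ t i)) (t : ℕ) (ht : t + 1 < T) (i : Fin d) :
    Integrable (incr t ht i) π :=
  (hπ.integrable_coord hmom _ i).sub (hπ.integrable_coord hmom _ i)

theorem HasMarginals.condExp_incr_ae_eq [IsFiniteMeasure π] (hπ : HasMarginals π μ)
    (hmom : ∀ t i, Integrable (fun y : ℝ => y) (μ t i)) (t : ℕ) (ht : t + 1 < T) (i : Fin d) :
    π[incr t ht i | pastSigma T d t] =ᵐ[π]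
      fun x => condNext π t ht i x - x ⟨t, Nat.lt_of_succ_lt ht⟩ i := by
  have hcoord := hπ.integrable_coord hmom
  have hpresent : π[fun x : Path T d => x ⟨t, Nat.lt_of_succ_lt ht⟩ i | pastSigma T d t] =
      fun x => x ⟨t, Nat.lt_of_succ_lt ht⟩ i :=
    condExp_of_stronglyMeasurable (pastSigma_le t)
      (measurable_coord_pastSigma le_rfl i).stronglyMeasurable (hcoord _ i)
  have hsub := condExp_sub (hcoord ⟨t + 1, ht⟩ i) (hcoord ⟨t, Nat.lt_of_succ_lt ht⟩ i)
    (pastSigma T d t)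
  rw [hpresent] at hsub
  exact hsub

theorem HasMarginals.integral_sum_abs_condNext_sub [IsFiniteMeasure π] (hπ : HasMarginals π μ)
    (hmom : ∀ t i, Integrable (fun y : ℝ => y) (μ t i)) (t : ℕ) (ht : t + 1 < T) :
    ∫ x, ∑ i, |condNext π t ht i x - x ⟨t, Nat.lt_of_succ_lt ht⟩ i| ∂π =
      ∑ i, ∫ x, |(π[incr t ht i | pastSigma T d t]) x| ∂π := by
  rw [← integral_finsetSum _ fun i _ => integrable_condExp.abs]
  refine integral_congr_ae ?_
  filter_upwards [ae_all_iff.2 (hπ.condExp_incr_ae_eq hmom t ht)] with x hx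
  simp only [hx]

theorem martSet_subset_martSetEps_zero : MartSet μ ⊆ MartSetEps μ 0 := by
  rintro π ⟨hprob, hπ, hmart⟩
  refine ⟨hprob, hπ, fun t ht => (integral_eq_zero_of_ae ?_).le⟩
  filter_upwards [ae_all_iff.2 (hmart t ht)] with x hx
  simp [hx]

theorem martSetEps_mono {ε ε' : ℝ} (h : ε ≤ ε') : MartSetEps μ ε ⊆ MartSetEps μ ε' :=
  fun _ ⟨hprob, hπ, hdef⟩ => ⟨hprob, hπ, fun t ht => (hdef t ht).trans h⟩

end Defect

namespace LipschitzCost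

variable {T d : ℕ} {c : Path T d → ℝ} {L : ℝ}

protected theorem continuous (hc : LipschitzCost L c) : Continuous c := by
  refine continuous_iff_continuousAt.2 fun x => tendsto_iff_dist_tendsto_zero.2 ?_
  have hbound : Tendsto (fun y : Path T d => L * ∑ t, ∑ i, |y t i - x t i|) (nhds x) (nhds 0) :=
    Continuous.tendsto' (by fun_prop) _ _ (by simp)
  exact squeeze_zero (fun _ => dist_nonneg) (fun y => hc y x) hbound

theorem abs_le (hc : LipschitzCost L c) (x : Path T d) :
    |c x| ≤ |c 0| + L * ∑ t, ∑ i, |x t i| := by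
  have hdiff := hc x 0
  simp only [Pi.zero_apply, sub_zero] at hdiff
  linarith [abs_sub_abs_le_abs_sub (c x) (c 0)]

protected theorem integrable (hc : LipschitzCost L c) {π : Measure (Path T d)} [IsFiniteMeasure π]
    {μ : Fin T → Fin d → Measure ℝ} (hπ : HasMarginals π μ)
    (hmom : ∀ t i, Integrable (fun y : ℝ => y) (μ t i)) : Integrable c π :=
  hπ.integrable_of_linear_growth hmom hc.continuous hc.abs_le

protected theorem neg (hc : LipschitzCost L c) : LipschitzCost L (-c) := fun x y => by
  simpa only [Pi.neg_apply, neg_sub_neg, abs_sub_comm] using hc x y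

theorem abs_right (hc : LipschitzCost L c) : LipschitzCost |L| c := fun x y =>
  (hc x y).trans (by gcongr; exact le_abs_self L)

end LipschitzCost

section CouplingRandomization

variable {α β : Type*} [MeasurableSpace α] [MeasurableSpace β] [StandardBorelSpace β] [Nonempty β]

theorem exists_measurable_map_prod_volume_eq (γ : Measure (α × β)) [IsProbabilityMeasure γ] :
    ∃ f : α → unitInterval → β, Measurable (Function.uncurry f) ∧
      ((γ.map Prod.fst).prod volume).map (fun p => (p.1, f p.1 p.2)) = γ := by
  obtain ⟨f, hf, hfγ⟩ :=
    ProbabilityTheory.Kernel.exists_measurable_map_eq_unitInterval γ.condKernel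
  refine ⟨f, hf, ?_⟩
  have hF : Measurable (fun p : α × unitInterval => (p.1, f p.1 p.2)) := measurable_fst.prodMk hf
  have : IsProbabilityMeasure (γ.map Prod.fst) := Measure.isProbabilityMeasure_map (by fun_prop)
  conv_rhs => rw [← γ.disintegrate γ.condKernel]
  refine Measure.ext_of_lintegral _ fun g hg => ?_
  rw [lintegral_map hg hF, lintegral_prod (fun z => g (z.1, f z.1 z.2)) (hg.comp hF).aemeasurable,
    Measure.lintegral_compProd hg]
  refine lintegral_congr fun a => ?_
  rw [← hfγ a, lintegral_map (by fun_prop) hf.of_uncurry_left]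

end CouplingRandomization

section Transport

variable {T d : ℕ} {μ ν : Fin T → Fin d → Measure ℝ} {π : Measure (Path T d)}

/-- Independent randomization of every coordinate of a path; it carries the product of the Lebesgue
measures. -/
abbrev Noise (T d : ℕ) := Fin T → Fin d → unitInterval

theorem map_noise_coord (t : Fin T) (i : Fin d) :
    (volume : Measure (Noise T d)).map (fun u => u t i) = volume :=
  ((measurePreserving_eval (fun _ : Fin d => (volume : Measure unitInterval)) i).comp
    (measurePreserving_eval (fun _ : Fin T => (volume : Measure (Fin d → unitInterval))) t)).map_eq

theorem exists_adapted_transport (γ : Fin T → Fin d → Measure (ℝ × ℝ))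
    (hγ : ∀ t i, IsProbabilityMeasure (γ t i)) [SFinite π]
    (hπ : HasMarginals π fun t i => (γ t i).map Prod.fst) :
    ∃ Y : Path T d × Noise T d → Path T d, Measurable Y ∧
      (∀ t u, Measurable[pastSigma T d t, pastSigma T d t] fun x => Y (x, u)) ∧
      ∀ t i, (π.prod volume).map (fun z => (z.1 t i, Y z t i)) = γ t i := by
  choose f hf hfγ using fun t i => exists_measurable_map_prod_volume_eq (γ t i)
  let Y : Path T d × Noise T d → Path T d := fun z t i => f t i (z.1 t i) (z.2 t i)
  refine ⟨Y, ?_, fun t u => ?_, fun t i => ?_⟩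
  · exact measurable_pi_lambda _ fun t => measurable_pi_lambda _ fun i =>
      (hf t i).comp (f := fun z : Path T d × Noise T d => (z.1 t i, z.2 t i)) (by fun_prop)
  · exact measurable_pastSigma_iff.2 fun s hst i =>
      (hf s i).of_uncurry_right.comp (measurable_coord_pastSigma hst i)
  · have hF : Measurable fun p : ℝ × unitInterval => (p.1, f t i p.1 p.2) :=
      measurable_fst.prodMk (hf t i)
    have hcoord : Measurable fun x : Path T d => x t i := by fun_prop
    have hnoise : Measurable fun u : Noise T d => u t i := by fun_prop
    calc (π.prod volume).map (fun z => (z.1 t i, Y z t i))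
      _ = ((π.prod volume).map (Prod.map (fun x => x t i) fun u : Noise T d => u t i)).map
          fun p => (p.1, f t i p.1 p.2) := (Measure.map_map hF (hcoord.prodMap hnoise)).symm
      _ = (((γ t i).map Prod.fst).prod volume).map fun p => (p.1, f t i p.1 p.2) := by
        rw [← Measure.map_prod_map _ _ hcoord hnoise, hπ t i, map_noise_coord]
      _ = γ t i := hfγ t i

theorem exists_adapted_transport_W1R (hμ : ∀ t i, IsProbabilityMeasure (μ t i))
    (hν : ∀ t i, IsProbabilityMeasure (ν t i))
    (hμmom : ∀ t i, Integrable (fun y : ℝ => y) (μ t i))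
    (hνmom : ∀ t i, Integrable (fun y : ℝ => y) (ν t i)) [SFinite π] (hπ : HasMarginals π μ) :
    ∃ Y : Path T d × Noise T d → Path T d, Measurable Y ∧
      (∀ t u, Measurable[pastSigma T d t, pastSigma T d t] fun x => Y (x, u)) ∧
      HasMarginals ((π.prod volume).map Y) ν ∧
      ∀ t i, ∫ z, |z.1 t i - Y z t i| ∂π.prod volume = W1R (μ t i) (ν t i) := by
  choose γ hγ hfst hsnd hcost using fun t i => exists_integral_eq_W1R (hμmom t i) (hνmom t i)
  obtain ⟨Y, hY, hYadapted, hYγ⟩ :=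
    exists_adapted_transport (π := π) γ hγ (by simpa only [hfst] using hπ)
  have hYcoord (t i) : Measurable fun z => Y z t i := by fun_prop
  have hpair (t i) : Measurable fun z : Path T d × Noise T d => (z.1 t i, Y z t i) := by fun_prop
  refine ⟨Y, hY, hYadapted, fun t i => ?_, fun t i => ?_⟩
  · rw [← hsnd t i, ← hYγ t i, Measure.map_map (by fun_prop) hY,
      Measure.map_map measurable_snd (hpair t i)]
    rfl
  · rw [← hcost t i, ← hYγ t i, integral_map (hpair t i).aemeasurable (by fun_prop)]

theorem HasMarginals.integrable_abs_coord_sub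
    (hμmom : ∀ t i, Integrable (fun y : ℝ => y) (μ t i))
    (hνmom : ∀ t i, Integrable (fun y : ℝ => y) (ν t i)) (hπ : HasMarginals π μ)
    {Y : Path T d × Noise T d → Path T d} (hY : Measurable Y)
    (hπY : HasMarginals ((π.prod volume).map Y) ν) (t : Fin T) (i : Fin d) :
    Integrable (fun z => |z.1 t i - Y z t i|) (π.prod volume) :=
  (((hπ.integrable_coord hμmom t i).comp_fst _).sub
    ((hπY.integrable_coord hνmom t i).comp_measurable hY)).abs

theorem HasMarginals.abs_integral_sub_integral_map_le [IsProbabilityMeasure π]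
    (hμmom : ∀ t i, Integrable (fun y : ℝ => y) (μ t i))
    (hνmom : ∀ t i, Integrable (fun y : ℝ => y) (ν t i)) (hπ : HasMarginals π μ)
    {Y : Path T d × Noise T d → Path T d} (hY : Measurable Y)
    (hπY : HasMarginals ((π.prod volume).map Y) ν) {c : Path T d → ℝ} {L : ℝ}
    (hc : LipschitzCost L c) :
    |∫ x, c x ∂π - ∫ y, c y ∂(π.prod volume).map Y| ≤
      L * ∑ t, ∑ i, ∫ z, |z.1 t i - Y z t i| ∂π.prod volume := by
  have : IsProbabilityMeasure ((π.prod volume).map Y) :=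
    Measure.isProbabilityMeasure_map hY.aemeasurable
  have hX : Integrable (fun z : Path T d × Noise T d => c z.1) (π.prod volume) :=
    (hc.integrable hπ hμmom).comp_fst _
  have hcY : Integrable (fun z => c (Y z)) (π.prod volume) :=
    (hc.integrable hπY hνmom).comp_measurable hY
  have hdist := hπ.integrable_abs_coord_sub hμmom hνmom hY hπY
  have hdist_sum (t) := integrable_finsetSum Finset.univ fun i _ => hdist t i
  calc |∫ x, c x ∂π - ∫ y, c y ∂(π.prod volume).map Y|
    _ = |∫ z, (c z.1 - c (Y z)) ∂π.prod volume| := by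
      rw [integral_sub hX hcY, integral_fun_fst c,
        integral_map hY.aemeasurable hc.continuous.aestronglyMeasurable]
      simp
    _ ≤ ∫ z, L * ∑ t, ∑ i, |z.1 t i - Y z t i| ∂π.prod volume :=
      abs_integral_le_integral_abs.trans (integral_mono (hX.sub hcY).abs
        ((integrable_finsetSum _ fun t _ => hdist_sum t).const_mul L) fun z => hc z.1 (Y z))
    _ = L * ∑ t, ∑ i, ∫ z, |z.1 t i - Y z t i| ∂π.prod volume := by
      rw [integral_const_mul, integral_finsetSum _ fun t _ => hdist_sum t]
      simp only [integral_finsetSum _ fun i _ => hdist _ i]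

theorem integral_abs_incr_sub_le {Ω : Type*} {mΩ : MeasurableSpace Ω} {P : Measure Ω}
    {X Y : Ω → Path T d} (hdist : ∀ t i, Integrable (fun ω => |X ω t i - Y ω t i|) P) (t : ℕ)
    (ht : t + 1 < T) (i : Fin d) :
    ∫ ω, |incr t ht i (X ω) - incr t ht i (Y ω)| ∂P ≤
      ∫ ω, |X ω ⟨t + 1, ht⟩ i - Y ω ⟨t + 1, ht⟩ i| ∂P +
      ∫ ω, |X ω ⟨t, Nat.lt_of_succ_lt ht⟩ i - Y ω ⟨t, Nat.lt_of_succ_lt ht⟩ i| ∂P := by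
  rw [← integral_add (hdist _ i) (hdist _ i)]
  refine integral_mono_of_nonneg (ae_of_all _ fun ω => abs_nonneg _) ((hdist _ i).add (hdist _ i))
    (ae_of_all _ fun ω => ?_)
  have := abs_sub (X ω ⟨t + 1, ht⟩ i - Y ω ⟨t + 1, ht⟩ i)
    (X ω ⟨t, Nat.lt_of_succ_lt ht⟩ i - Y ω ⟨t, Nat.lt_of_succ_lt ht⟩ i)
  simpa only [incr, sub_sub_sub_comm] using this

theorem exists_mem_martSetEps_of_W1R_le (hμ : ∀ t i, IsProbabilityMeasure (μ t i))
    (hν : ∀ t i, IsProbabilityMeasure (ν t i))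
    (hμmom : ∀ t i, Integrable (fun y : ℝ => y) (μ t i))
    (hνmom : ∀ t i, Integrable (fun y : ℝ => y) (ν t i)) {ρ ε : ℝ}
    (hρ : ∀ t, ∑ i, W1R (μ t i) (ν t i) ≤ ρ) (hπ : π ∈ MartSetEps μ ε) :
    ∃ π' ∈ MartSetEps ν (ε + 2 * ρ), ∀ (c : Path T d → ℝ) (L : ℝ), 0 ≤ L → LipschitzCost L c →
      |∫ x, c x ∂π - ∫ x, c x ∂π'| ≤ L * (T * ρ) := by
  obtain ⟨hprob, hπμ, hdef⟩ := hπ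
  obtain ⟨Y, hY, hYadapted, hYν, hYcost⟩ :=
    exists_adapted_transport_W1R hμ hν hμmom hνmom hπμ
  have hprob' : IsProbabilityMeasure ((π.prod volume).map Y) :=
    Measure.isProbabilityMeasure_map hY.aemeasurable
  have hdist := hπμ.integrable_abs_coord_sub hμmom hνmom hY hYν
  refine ⟨(π.prod volume).map Y, ⟨hprob', hYν, fun t ht => ?_⟩, fun c L hL hc => ?_⟩
  · have hdefπ := hdef t ht
    rw [hπμ.integral_sum_abs_condNext_sub hμmom] at hdefπ
    rw [hYν.integral_sum_abs_condNext_sub hνmom]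
    calc ∑ i, ∫ y, |(((π.prod volume).map Y)[incr t ht i | pastSigma T d t]) y|
          ∂(π.prod volume).map Y
      _ ≤ ∑ i, (∫ x, |(π[incr t ht i | pastSigma T d t]) x| ∂π +
          (W1R (μ ⟨t + 1, ht⟩ i) (ν ⟨t + 1, ht⟩ i) +
            W1R (μ ⟨t, Nat.lt_of_succ_lt ht⟩ i) (ν ⟨t, Nat.lt_of_succ_lt ht⟩ i))) := by
        refine Finset.sum_le_sum fun i _ => ?_
        refine (integral_abs_condExp_map_prod_le (pastSigma_le t) (pastSigma_le t) hY (hYadapted t)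
          (hπμ.integrable_incr hμmom t ht i) (hYν.integrable_incr hνmom t ht i)).trans ?_
        have := integral_abs_incr_sub_le (X := Prod.fst) hdist t ht i
        rw [hYcost, hYcost] at this
        gcongr
      _ ≤ ε + 2 * ρ := by
        rw [Finset.sum_add_distrib, Finset.sum_add_distrib, two_mul]
        gcongr <;> exact hρ _
  · refine (hπμ.abs_integral_sub_integral_map_le hμmom hνmom hY hYν hc).trans ?_
    simp only [hYcost]
    gcongr
    simpa using Finset.sum_le_card_nsmul Finset.univ _ ρ fun t _ => hρ t

end Transport

section MartingaleLimits

variable {T d : ℕ} {μ : Fin T → Fin d → Measure ℝ}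

theorem abs_incr_le (t : ℕ) (ht : t + 1 < T) (i : Fin d) (x : Path T d) :
    |incr t ht i x| ≤ 2 * ∑ t, ∑ i, |x t i| := by
  have hcoord (s) : |x s i| ≤ ∑ t, ∑ i, |x t i| :=
    (Finset.single_le_sum (f := fun i => |x s i|) (fun _ _ => abs_nonneg _)
      (Finset.mem_univ i)).trans
    (Finset.single_le_sum (f := fun s => ∑ i, |x s i|)
      (fun _ _ => Finset.sum_nonneg fun _ _ => abs_nonneg _) (Finset.mem_univ s))
  rw [two_mul]
  exact (abs_sub _ _).trans (add_le_add (hcoord _) (hcoord _))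

theorem abs_integral_mul_incr_le (hmom : ∀ t i, Integrable (fun y : ℝ => y) (μ t i)) {ε : ℝ}
    {π : Measure (Path T d)} (hπ : π ∈ MartSetEps μ ε) (t : ℕ) (ht : t + 1 < T) (i : Fin d)
    {h : Path T d → ℝ} (hh : StronglyMeasurable[pastSigma T d t] h) {C : ℝ} (hC : 0 ≤ C)
    (hhC : ∀ x, |h x| ≤ C) : |∫ x, h x * incr t ht i x ∂π| ≤ C * ε := by
  obtain ⟨hprob, hπμ, hdef⟩ := hπ
  refine (abs_integral_mul_le_integral_abs_condExp (pastSigma_le t)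
    (hπμ.integrable_incr hmom t ht i) hh hhC).trans (mul_le_mul_of_nonneg_left ?_ hC)
  refine le_trans ?_ ((hπμ.integral_sum_abs_condNext_sub hmom t ht).ge.trans (hdef t ht))
  exact Finset.single_le_sum (f := fun i => ∫ x, |(π[incr t ht i | pastSigma T d t]) x| ∂π)
    (fun _ _ => integral_nonneg fun _ => abs_nonneg _) (Finset.mem_univ i)

theorem mem_martSet_of_tendsto (hmom : ∀ t i, Integrable (fun y : ℝ => y) (μ t i)) {ι : Type*}
    {l : Filter ι} [l.NeBot] {ε : ι → ℝ} (hε : Tendsto ε l (nhds 0))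
    {p : ι → ProbabilityMeasure (Path T d)} {q : ProbabilityMeasure (Path T d)}
    (hp : ∀ n, (p n : Measure (Path T d)) ∈ MartSetEps μ (ε n)) (hpq : Tendsto p l (nhds q))
    (hq : HasMarginals (q : Measure (Path T d)) μ) : (q : Measure (Path T d)) ∈ MartSet μ := by
  refine ⟨inferInstance, hq, fun t ht i => ?_⟩
  have htest (g : ({s : Fin T // (s : ℕ) ≤ t} → Fin d → ℝ) → ℝ) (hg : Continuous g)
      (hgsupp : HasCompactSupport g) :
      ∫ x, g (past T d t x) * incr t ht i x ∂(q : Measure (Path T d)) = 0 := by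
    obtain ⟨C, hC⟩ := hgsupp.exists_bound_of_continuous hg
    have hC0 : 0 ≤ C := (norm_nonneg _).trans (hC 0)
    have hgrowth (x : Path T d) :
        |g (past T d t x) * incr t ht i x| ≤ 0 + C * 2 * ∑ t, ∑ i, |x t i| := by
      rw [zero_add, mul_assoc, abs_mul]
      exact mul_le_mul (hC _) (abs_incr_le t ht i x) (abs_nonneg _) hC0
    have hlim := (continuousOn_integral_of_linear_growth hmom
      ((hg.comp (continuous_past t)).mul (continuous_incr t ht i)) hgrowth q hq).tendsto.comp
        (tendsto_nhdsWithin_iff.2 ⟨hpq, Eventually.of_forall fun n => (hp n).2.1⟩)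
    have hpast : StronglyMeasurable[pastSigma T d t] fun x => g (past T d t x) := by
      rw [pastSigma_eq_comap_past]
      exact (hg.measurable.comp (comap_measurable _)).stronglyMeasurable
    exact tendsto_nhds_unique hlim (squeeze_zero_norm
      (fun n => abs_integral_mul_incr_le hmom (hp n) t ht i hpast hC0 fun x => hC _)
      (by simpa using hε.const_mul C))
  have hzero := condExp_comap_ae_eq_zero (continuous_past t).measurable
    (hq.integrable_incr hmom t ht i) htest
  rw [← pastSigma_eq_comap_past] at hzero
  filter_upwards [hq.condExp_incr_ae_eq hmom t ht i, hzero] with x hx hx0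
  exact sub_eq_zero.1 (hx.symm.trans hx0)

theorem exists_pos_forall_mem_martSetEps (hμ : ∀ t i, IsProbabilityMeasure (μ t i))
    (hmom : ∀ t i, Integrable (fun y : ℝ => y) (μ t i)) {f : Path T d → ℝ} (hf : Continuous f)
    {a b : ℝ} (hfab : ∀ x, |f x| ≤ a + b * ∑ t, ∑ i, |x t i|) {η : ℝ} (hη : 0 < η) :
    ∃ δ > 0, ∀ π ∈ MartSetEps μ δ, ∃ π' ∈ MartSet μ, |∫ x, f x ∂π - ∫ x, f x ∂π'| < η := by
  by_contra! hfar
  choose π hπ hπfar using fun n : ℕ => hfar (1 / ((n : ℝ) + 1)) Nat.one_div_pos_of_nat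
  let p (n : ℕ) : ProbabilityMeasure (Path T d) := ⟨π n, (hπ n).1⟩
  obtain ⟨q, hq, φ, hφ, hlim⟩ :=
    (isCompact_setOf_hasMarginals hμ).tendsto_subseq (x := p) fun n => (hπ n).2.1
  have hqmart := mem_martSet_of_tendsto hmom (p := p ∘ φ)
    (ε := fun n => 1 / ((φ n : ℝ) + 1))
    (tendsto_one_div_add_atTop_nhds_zero_nat.comp hφ.tendsto_atTop) (fun n => hπ (φ n)) hlim hq
  have hint := (continuousOn_integral_of_linear_growth hmom hf hfab q hq).tendsto.comp
    (tendsto_nhdsWithin_iff.2 ⟨hlim, Eventually.of_forall fun n => (hπ (φ n)).2.1⟩)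
  obtain ⟨n, hn⟩ := (Metric.tendsto_nhds.1 hint η hη).exists
  exact (hπfar (φ n) q hqmart).not_gt hn

end MartingaleLimits

section Values

variable {T d : ℕ} {μ ν : Fin T → Fin d → Measure ℝ} {c : Path T d → ℝ}

theorem primalVals_neg (c : Path T d → ℝ) (S : Set (Measure (Path T d))) :
    primalVals (-c) S = -primalVals c S := by
  ext r
  simp only [primalVals, Set.mem_neg, Set.mem_ofPred_eq, integrable_neg_iff, Pi.neg_apply,
    integral_neg, neg_eq_iff_eq_neg]

theorem PlowEps_eq_neg_PbarEps (μ : Fin T → Fin d → Measure ℝ) (c : Path T d → ℝ) (ε : ℝ) :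
    PlowEps μ c ε = -PbarEps μ (-c) ε := by
  rw [PlowEps, PbarEps, primalVals_neg, Real.sInf_def]

theorem Plow_eq_neg_Pbar (μ : Fin T → Fin d → Measure ℝ) (c : Path T d → ℝ) :
    Plow μ c = -Pbar μ (-c) := by
  rw [Plow, Pbar, primalVals_neg, Real.sInf_def]

theorem LipschitzCost.bddAbove_primalVals {L : ℝ} (hc : LipschitzCost L c)
    (hμ : ∀ t i, IsProbabilityMeasure (μ t i))
    (hmom : ∀ t i, Integrable (fun y : ℝ => y) (μ t i)) (ε : ℝ) :
    BddAbove (primalVals c (MartSetEps μ ε)) := by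
  refine ((isCompact_setOf_hasMarginals hμ).bddAbove_image
    (continuousOn_integral_of_linear_growth hmom hc.continuous hc.abs_le)).mono ?_
  rintro _ ⟨π, ⟨hprob, hπ, -⟩, -, rfl⟩
  exact ⟨⟨π, hprob⟩, hπ, rfl⟩

theorem sSup_primalVals_le_add {S S' : Set (Measure (Path T d))} {η : ℝ} (hS : S.Nonempty)
    (hcS : ∀ π ∈ S, Integrable c π) (hcS' : ∀ π ∈ S', Integrable c π)
    (hbdd : BddAbove (primalVals c S'))
    (h : ∀ π ∈ S, ∃ π' ∈ S', |∫ x, c x ∂π - ∫ x, c x ∂π'| ≤ η) :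
    sSup (primalVals c S) ≤ sSup (primalVals c S') + η := by
  obtain ⟨π, hπ⟩ := hS
  refine csSup_le ⟨_, π, hπ, hcS π hπ, rfl⟩ ?_
  rintro _ ⟨π, hπ, -, rfl⟩
  obtain ⟨π', hπ', hle⟩ := h π hπ
  have hsup := le_csSup hbdd ⟨π', hπ', hcS' π' hπ', rfl⟩
  linarith [(abs_le.1 hle).2]

theorem Pbar_le_PbarEps_add {L : ℝ} (hL : 0 ≤ L) (hc : LipschitzCost L c)
    (hμ : ∀ t i, IsProbabilityMeasure (μ t i)) (hν : ∀ t i, IsProbabilityMeasure (ν t i))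
    (hμmom : ∀ t i, Integrable (fun y : ℝ => y) (μ t i))
    (hνmom : ∀ t i, Integrable (fun y : ℝ => y) (ν t i)) (hne : (MartSet μ).Nonempty) {ρ ε : ℝ}
    (hρ : ∀ t, ∑ i, W1R (μ t i) (ν t i) ≤ ρ) (hε : 2 * ρ ≤ ε) :
    Pbar μ c ≤ PbarEps ν c ε + L * (T * ρ) := by
  refine sSup_primalVals_le_add hne (fun π hπ => ?_) (fun π hπ => ?_)
    (hc.bddAbove_primalVals hν hνmom ε) fun π hπ => ?_
  · have := hπ.1
    exact hc.integrable hπ.2.1 hμmom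
  · have := hπ.1
    exact hc.integrable hπ.2.1 hνmom
  · obtain ⟨π', hπ', hcost⟩ := exists_mem_martSetEps_of_W1R_le hμ hν hμmom hνmom hρ
      (martSet_subset_martSetEps_zero hπ)
    exact ⟨π', martSetEps_mono (by linarith) hπ', hcost c L hL hc⟩

theorem PbarEps_le_Pbar_add {L : ℝ} (hL : 0 ≤ L) (hc : LipschitzCost L c)
    (hμ : ∀ t i, IsProbabilityMeasure (μ t i)) (hν : ∀ t i, IsProbabilityMeasure (ν t i))
    (hμmom : ∀ t i, Integrable (fun y : ℝ => y) (μ t i))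
    (hνmom : ∀ t i, Integrable (fun y : ℝ => y) (ν t i)) {ρ ε δ η : ℝ}
    (hδ : ∀ π ∈ MartSetEps μ δ, ∃ π' ∈ MartSet μ, |∫ x, c x ∂π - ∫ x, c x ∂π'| < η)
    (hρ : ∀ t, ∑ i, W1R (ν t i) (μ t i) ≤ ρ) (hne : (MartSetEps ν ε).Nonempty)
    (hε : ε + 2 * ρ ≤ δ) : PbarEps ν c ε ≤ Pbar μ c + (L * (T * ρ) + η) := by
  refine sSup_primalVals_le_add hne (fun π hπ => ?_) (fun π hπ => ?_)
    ((hc.bddAbove_primalVals hμ hμmom 0).mono ?_) fun π hπ => ?_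
  · have := hπ.1
    exact hc.integrable hπ.2.1 hνmom
  · have := hπ.1
    exact hc.integrable hπ.2.1 hμmom
  · rintro _ ⟨π, hπ, hπc⟩
    exact ⟨π, martSet_subset_martSetEps_zero hπ, hπc⟩
  · obtain ⟨π₁, hπ₁, hcost₁⟩ := exists_mem_martSetEps_of_W1R_le hν hμ hνmom hμmom hρ hπ
    obtain ⟨π₂, hπ₂, hcost₂⟩ := hδ π₁ (martSetEps_mono hε hπ₁)
    exact ⟨π₂, hπ₂, (abs_sub_le _ (∫ x, c x ∂π₁) _).trans
      (add_le_add (hcost₁ c L hL hc) hcost₂.le)⟩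

theorem martSetEps_nonempty_of_W1R_le (hμ : ∀ t i, IsProbabilityMeasure (μ t i))
    (hν : ∀ t i, IsProbabilityMeasure (ν t i))
    (hμmom : ∀ t i, Integrable (fun y : ℝ => y) (μ t i))
    (hνmom : ∀ t i, Integrable (fun y : ℝ => y) (ν t i)) (hne : (MartSet μ).Nonempty) {ρ ε : ℝ}
    (hρ : ∀ t, ∑ i, W1R (μ t i) (ν t i) ≤ ρ) (hε : 2 * ρ ≤ ε) : (MartSetEps ν ε).Nonempty := by
  obtain ⟨π, hπ⟩ := hne
  obtain ⟨π', hπ', -⟩ := exists_mem_martSetEps_of_W1R_le hμ hν hμmom hνmom hρ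
    (martSet_subset_martSetEps_zero hπ)
  exact ⟨π', martSetEps_mono (by linarith) hπ'⟩

theorem tendsto_PbarEps {L : ℝ} (hc : LipschitzCost L c)
    (hμ : ∀ t i, IsProbabilityMeasure (μ t i))
    (hμmom : ∀ t i, Integrable (fun y : ℝ => y) (μ t i)) (hne : (MartSet μ).Nonempty)
    {ι : Type*} {l : Filter ι} {μn : ι → Fin T → Fin d → Measure ℝ}
    (hμn : ∀ n t i, IsProbabilityMeasure (μn n t i))
    (hμnmom : ∀ n t i, Integrable (fun y : ℝ => y) (μn n t i)) {ρ ε : ι → ℝ}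
    (hρ : ∀ n t, ∑ i, W1R (μ t i) (μn n t i) ≤ ρ n) (hρε : ∀ n, 2 * ρ n ≤ ε n)
    (hρ0 : Tendsto ρ l (nhds 0)) (hε0 : Tendsto ε l (nhds 0)) :
    Tendsto (fun n => PbarEps (μn n) c (ε n)) l (nhds (Pbar μ c)) := by
  refine Metric.tendsto_nhds.2 fun η hη => ?_
  obtain ⟨δ, hδ0, hδ⟩ :=
    exists_pos_forall_mem_martSetEps hμ hμmom hc.continuous hc.abs_le (half_pos hη)
  have hcost : ∀ᶠ n in l, |L| * (T * ρ n) < η / 2 :=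
    ((hρ0.const_mul (T : ℝ)).const_mul |L|).eventually_lt_const (by simpa using hη)
  have hdefect : ∀ᶠ n in l, ε n + 2 * ρ n < δ :=
    (hε0.add (hρ0.const_mul 2)).eventually_lt_const (by simpa using hδ0)
  filter_upwards [hcost, hdefect] with n hn hεn
  have hlower : Pbar μ c ≤ PbarEps (μn n) c (ε n) + |L| * (T * ρ n) :=
    Pbar_le_PbarEps_add (abs_nonneg L) hc.abs_right hμ (hμn n) hμmom (hμnmom n) hne (hρ n) (hρε n)
  have hupper : PbarEps (μn n) c (ε n) ≤ Pbar μ c + (|L| * (T * ρ n) + η / 2) :=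
    PbarEps_le_Pbar_add (abs_nonneg L) hc.abs_right hμ (hμn n) hμmom (hμnmom n) hδ
      (by simpa only [W1R_comm] using hρ n)
      (martSetEps_nonempty_of_W1R_le hμ (hμn n) hμmom (hμnmom n) hne (hρ n) (hρε n)) hεn.le
  rw [Real.dist_eq, abs_lt]
  constructor <;> linarith

end Values

/-- Theorem, part (i): convergence of the discretised relaxed problems.
If `r_n := 2 max_t Σ_i 𝒲₁(μⁿ_{t,i}, μ_{t,i}) → 0` then `ℳ_{r_n}(μ̌ⁿ) ≠ ∅` for all `n`, and for
every Lipschitz cost `c` and every sequence `ε_n → 0` with `ε_n ≥ r_n`,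
`P̄_{ε_n}(μ̌ⁿ) → P̄(μ̌)` and `P̲_{ε_n}(μ̌ⁿ) → P̲(μ̌)`. -/
theorem mmot_lp_convergence {T d : ℕ} (hT : 0 < T)
    (μ : Fin T → Fin d → Measure ℝ)
    (hprob : ∀ t i, IsProbabilityMeasure (μ t i))
    (hmom : ∀ t i, Integrable (fun y : ℝ => y) (μ t i))
    (hne : (MartSet μ).Nonempty)
    (μn : ℕ → Fin T → Fin d → Measure ℝ)
    (hprobn : ∀ n t i, IsProbabilityMeasure (μn n t i))
    (hmomn : ∀ n t i, Integrable (fun y : ℝ => y) (μn n t i))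
    (r : ℕ → ℝ)
    (hrdef : ∀ n, r n = 2 * Finset.univ.sup' ⟨⟨0, hT⟩, Finset.mem_univ _⟩
      (fun t => ∑ i, W1R (μn n t i) (μ t i)))
    (hr0 : Tendsto r atTop (nhds 0)) :
    (∀ n, (MartSetEps (μn n) (r n)).Nonempty) ∧
    ∀ (c : Path T d → ℝ) (L : ℝ), LipschitzCost L c →
      ∀ ε : ℕ → ℝ, Tendsto ε atTop (nhds 0) → (∀ n, r n ≤ ε n) →
        Tendsto (fun n => PbarEps (μn n) c (ε n)) atTop (nhds (Pbar μ c)) ∧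
        Tendsto (fun n => PlowEps (μn n) c (ε n)) atTop (nhds (Plow μ c)) := by
  have hρ (n t) : ∑ i, W1R (μ t i) (μn n t i) ≤ r n / 2 := by
    rw [hrdef, mul_div_cancel_left₀ _ two_ne_zero]
    simp only [W1R_comm (μ _ _)]
    exact Finset.le_sup' (fun t => ∑ i, W1R (μn n t i) (μ t i)) (Finset.mem_univ t)
  have hρ0 : Tendsto (fun n => r n / 2) atTop (nhds 0) := by simpa using hr0.div_const 2
  refine ⟨fun n => martSetEps_nonempty_of_W1R_le hprob (hprobn n) hmom (hmomn n) hne (hρ n)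
    (by linarith), fun c L hc ε hε0 hrε => ?_⟩
  have hlim {c' : Path T d → ℝ} (hc' : LipschitzCost L c') :
      Tendsto (fun n => PbarEps (μn n) c' (ε n)) atTop (nhds (Pbar μ c')) :=
    tendsto_PbarEps hc' hprob hmom hne hprobn hmomn hρ (fun n => by linarith [hrε n]) hρ0 hε0
  refine ⟨hlim hc, ?_⟩
  simpa only [PlowEps_eq_neg_PbarEps, Plow_eq_neg_Pbar] using (hlim hc.neg).neg

end MMOT
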